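/- arXiv:1702.00092 — 2 statements merged into one kernel-verified Lean document; each statement's English description precedes it below -/
import Mathlib

section
/- Let q be a real number with q > 1, and let m and r₂ be nonnegative integers. With (q)_j = ∏_{i=1}^{j}(1 − q^{−i}) and (q²)_j = ∏_{i=1}^{j}(1 − q^{−2i}), define for 0 ≤ k ≤ m: p̃(k) = (q)_{2m+r₂} · (q²)_m · (q²)_{m+r₂} / ( q^{k(k+r₂)} · (q)_k · (q)_{k+r₂} · (q²)_{2m+r₂} · (q²)_{m−k} ). Then ∑_{k=0}^{m} q^k · p̃(k) = (1 + q^{−r₂})/(1 + q^{−2m−r₂}). -/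
open Finset

/-- The `q`-Pochhammer-type symbol `(q)_j = ∏_{i=1}^{j}(1 − q^{−i})`. -/
noncomputable def qPoch (q : ℝ) (j : ℕ) : ℝ :=
  ∏ i ∈ Icc 1 j, (1 - (q ^ i)⁻¹)

/-- The symbol `(q²)_j = ∏_{i=1}^{j}(1 − q^{−2i})`. -/
noncomputable def qSqPoch (q : ℝ) (j : ℕ) : ℝ :=
  ∏ i ∈ Icc 1 j, (1 - (q ^ (2 * i))⁻¹)

/-- The summand `p̃(k)` of the mass-formula identity. -/
noncomputable def pTilde (q : ℝ) (m r₂ k : ℕ) : ℝ :=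
  qPoch q (2 * m + r₂) * qSqPoch q m * qSqPoch q (m + r₂) /
    (q ^ (k * (k + r₂)) * qPoch q k * qPoch q (k + r₂) * qSqPoch q (2 * m + r₂) *
      qSqPoch q (m - k))

lemma qPoch_succ' (q : ℝ) (j : ℕ) : qPoch q (j+1) = qPoch q j * (1 - q⁻¹ ^ (j+1)) := by
  unfold qPoch
  rw [Finset.prod_Icc_succ_top (by omega), inv_pow]

lemma qSqPoch_succ' (q : ℝ) (j : ℕ) :
    qSqPoch q (j+1) = qSqPoch q j * (1 - q⁻¹ ^ (2*(j+1))) := by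
  unfold qSqPoch
  rw [Finset.prod_Icc_succ_top (by omega), inv_pow]

lemma one_sub_ne (x : ℝ) (h0 : 0 < x) (h1 : x < 1) (n : ℕ) : 1 - x ^ (n+1) ≠ 0 := by
  have : x ^ (n+1) < 1 := pow_lt_one₀ h0.le h1 (by omega)
  linarith

lemma qPoch_ne (q : ℝ) (hq : 1 < q) (j : ℕ) : qPoch q j ≠ 0 := by
  induction j with
  | zero => simp [qPoch]
  | succ j ih =>
    rw [qPoch_succ']
    exact mul_ne_zero ih (one_sub_ne _ (by positivity) (inv_lt_one_of_one_lt₀ hq) _)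

lemma qSqPoch_ne (q : ℝ) (hq : 1 < q) (j : ℕ) : qSqPoch q j ≠ 0 := by
  induction j with
  | zero => simp [qSqPoch]
  | succ j ih =>
    rw [qSqPoch_succ']
    exact mul_ne_zero ih (one_sub_ne _ (by positivity) (inv_lt_one_of_one_lt₀ hq) (2*j+1))

/-- normalized summand -/
noncomputable def aTerm (q : ℝ) (m r k : ℕ) : ℝ :=
  q⁻¹ ^ (k * (k + r)) / (qPoch q k * qPoch q (k + r) * qSqPoch q (m - k))

/-- normalized sum -/
noncomputable def aSum (q : ℝ) (m r : ℕ) : ℝ := ∑ k ∈ range (m + 1), aTerm q m r k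

lemma rel_one (q : ℝ) (hq : 1 < q) (m r k : ℕ) (hk : k ≤ m) :
    (1 - q⁻¹ ^ (2 * (m + 1)) * (q ^ k) ^ 2) * aTerm q (m+1) r k = aTerm q m r k := by
  obtain ⟨d, rfl⟩ := Nat.exists_eq_add_of_le hk
  have e1 : k + d + 1 - k = d + 1 := by omega
  have e2 : k + d - k = d := by omega
  have hq0 : q ≠ 0 := by positivity
  have e3 : q⁻¹ ^ (2 * (k + d + 1)) * (q ^ k) ^ 2 = q⁻¹ ^ (2 * (d+1)) := by
    rw [show 2 * (k+d+1) = 2*(d+1) + k * 2 by ring, pow_add, mul_assoc, pow_mul _ k, ← mul_pow,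
      ← mul_pow, inv_mul_cancel₀ hq0]; simp
  unfold aTerm
  rw [e1, e2, e3, qSqPoch_succ']
  have h1 := qPoch_ne q hq k
  have h2 := qPoch_ne q hq (k+r)
  have h3 := qSqPoch_ne q hq d
  have h4 := one_sub_ne q⁻¹ (by positivity) (inv_lt_one_of_one_lt₀ hq) (2*d+1)
  rw [show 2*d+1+1 = 2*(d+1) by ring] at h4
  generalize q⁻¹ ^ (2 * (d+1)) = y at *
  generalize q⁻¹ ^ (k * (k+r)) = z at *
  field_simp

lemma rel_two (q : ℝ) (hq : 1 < q) (m r k : ℕ) :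
    (q ^ (k+1)) ^ 2 * (1 - q⁻¹ ^ (k+1)) * (1 - q⁻¹ ^ (k+1+r)) * aTerm q (m+1) r (k+1)
      = q⁻¹ ^ r * q * aTerm q m r k := by
  have hq0 : q ≠ 0 := by positivity
  unfold aTerm
  rw [show m + 1 - (k+1) = m - k by omega, show k + 1 + r = (k + r) + 1 by ring,
    qPoch_succ', qPoch_succ']
  have h1 := qPoch_ne q hq k
  have h2 := qPoch_ne q hq (k+r)
  have h3 := qSqPoch_ne q hq (m-k)
  have h4 := one_sub_ne q⁻¹ (by positivity) (inv_lt_one_of_one_lt₀ hq) k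
  have h5 := one_sub_ne q⁻¹ (by positivity) (inv_lt_one_of_one_lt₀ hq) (k+r)
  have e : (q ^ (k+1)) ^ 2 * q⁻¹ ^ ((k+1) * (k+r+1)) = q⁻¹ ^ r * q * q⁻¹ ^ (k * (k+r)) := by
    simp only [inv_pow]
    field_simp
    ring
  generalize 1 - q⁻¹ ^ (k+1) = y at *
  generalize 1 - q⁻¹ ^ (k+r+1) = z at *
  rw [← mul_div_assoc, ← mul_div_assoc, ← e]
  generalize q⁻¹ ^ ((k+1) * (k+r+1)) = w at *
  field_simp

lemma rel_three (q : ℝ) (hq : 1 < q) (m r k : ℕ) :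
    q ^ (k+1) * (1 - q⁻¹ ^ (k+1)) * aTerm q (m+1) r (k+1)
      = q⁻¹ ^ r * aTerm q m (r+1) k := by
  have hq0 : q ≠ 0 := by positivity
  unfold aTerm
  rw [show m + 1 - (k+1) = m - k by omega, show k + 1 + r = k + (r + 1) by ring,
    qPoch_succ']
  have h1 := qPoch_ne q hq k
  have h2 := qPoch_ne q hq (k+(r+1))
  have h3 := qSqPoch_ne q hq (m-k)
  have h4 := one_sub_ne q⁻¹ (by positivity) (inv_lt_one_of_one_lt₀ hq) k
  have e : q ^ (k+1) * q⁻¹ ^ ((k+1) * (k+(r+1))) = q⁻¹ ^ r * q⁻¹ ^ (k * (k+(r+1))) := by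
    simp only [inv_pow]
    field_simp
    ring
  generalize 1 - q⁻¹ ^ (k+1) = y at *
  rw [← mul_div_assoc, ← mul_div_assoc, ← e]
  generalize q⁻¹ ^ ((k+1) * (k+(r+1))) = w at *
  field_simp

lemma sum_three (q : ℝ) (hq : 1 < q) (m r : ℕ) :
    ∑ k ∈ range (m + 2), q ^ k * (1 - q⁻¹ ^ k) * aTerm q (m+1) r k
      = q⁻¹ ^ r * aSum q m (r+1) := by
  rw [Finset.sum_range_succ', aSum, Finset.mul_sum]
  simp only [rel_three q hq]
  simp

lemma sum_two (q : ℝ) (hq : 1 < q) (m r : ℕ) :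
    ∑ k ∈ range (m + 2), (q ^ k) ^ 2 * (1 - q⁻¹ ^ k) * (1 - q⁻¹ ^ (k+r)) * aTerm q (m+1) r k
      = q⁻¹ ^ r * q * aSum q m r := by
  rw [Finset.sum_range_succ', aSum, Finset.mul_sum]
  simp only [rel_two q hq]
  simp

lemma sum_one (q : ℝ) (hq : 1 < q) (m r : ℕ) :
    ∑ k ∈ range (m + 2), (1 - q⁻¹ ^ (2 * (m + 1)) * (q ^ k) ^ 2) * aTerm q (m+1) r k
      = aSum q m r := by
  have hq0 : q ≠ 0 := by positivity
  rw [Finset.sum_range_succ, aSum]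
  have : q⁻¹ ^ (2 * (m + 1)) * (q ^ (m+1)) ^ 2 = 1 := by
    rw [← pow_mul, mul_comm (m+1) 2, ← mul_pow, inv_mul_cancel₀ hq0, one_pow]
  rw [this, sub_self, zero_mul, add_zero]
  exact Finset.sum_congr rfl fun k hk => rel_one q hq m r k (by simp at hk; omega)

lemma aSum_rec (q : ℝ) (hq : 1 < q) (m r : ℕ) :
    (1 - q⁻¹ ^ (2 * (m + 1))) * aSum q (m+1) r = (1 + q⁻¹ ^ (2*m+r+1)) * aSum q m r
      + q⁻¹ ^ (2*(m+1)) * (1 + q⁻¹ ^ r) * (q⁻¹ ^ r * aSum q m (r+1)) := by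
  have hq0 : q ≠ 0 := by positivity
  have e : (1 + q⁻¹ ^ (2*m+r+1)) * aSum q m r = aSum q m r +
      q⁻¹ ^ (2*(m+1)) * (q⁻¹ ^ r * q * aSum q m r) := by
    have : q⁻¹ ^ (2*m+r+1) = q⁻¹ ^ (2*(m+1)) * (q⁻¹ ^ r * q) := by
      simp only [inv_pow]
      field_simp
      ring
    rw [this]; ring
  rw [e, ← sum_two q hq, ← sum_three q hq]
  conv_rhs => rw [← sum_one q hq]
  rw [aSum, Finset.mul_sum, Finset.mul_sum, Finset.mul_sum, ← Finset.sum_add_distrib,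
    ← Finset.sum_add_distrib]
  refine Finset.sum_congr rfl fun k _ => ?_
  have hx : q⁻¹ ^ k * q ^ k = 1 := by rw [← mul_pow, inv_mul_cancel₀ hq0, one_pow]
  rw [pow_add]
  generalize q⁻¹ ^ k = X at *
  generalize q ^ k = Y at *
  generalize q⁻¹ ^ (2*(m+1)) = M
  generalize q⁻¹ ^ r = R
  generalize aTerm q (m+1) r k = a
  linear_combination (-a * M * (-Y*(1+R) + R*(X*Y+1) - (1+R))) * hx

lemma aSum_closed (q : ℝ) (hq : 1 < q) (m : ℕ) : ∀ r : ℕ,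
    aSum q m r * (qPoch q (2*m+r) * qSqPoch q m * qSqPoch q (m+r)) = qSqPoch q (2*m+r) := by
  induction m with
  | zero =>
    intro r
    have := qPoch_ne q hq r
    have h0 : qPoch q 0 = 1 := by simp [qPoch]
    have h1 : qSqPoch q 0 = 1 := by simp [qSqPoch]
    simp [aSum, aTerm, h0, h1]
    field_simp
  | succ m ih =>
    intro r
    have h1 := ih r
    have h2 := ih (r+1)
    have h3 := aSum_rec q hq m r
    rw [show 2*(m+1)+r = 2*m+r+1+1 by ring, show m+1+r = m+r+1 by ring]
    rw [show 2*m+(r+1) = 2*m+r+1 by ring, show m+(r+1) = m+r+1 by ring] at h2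
    simp only [qPoch_succ', qSqPoch_succ'] at *
    have e1 : q⁻¹ ^ (2*(2*m+r+1)) = (q⁻¹ ^ (2*m+r+1))^2 := by ring
    have e2 : q⁻¹ ^ (2*(2*m+r+1+1)) = (q⁻¹ ^ (2*(m+1)) * q⁻¹ ^ r)^2 := by ring
    have e3 : q⁻¹ ^ (2*m+r+1+1) = q⁻¹ ^ (2*(m+1)) * q⁻¹ ^ r := by ring
    have e4 : q⁻¹ ^ (2*(m+r+1)) = q⁻¹ ^ (2*(m+1)) * (q⁻¹ ^ r)^2 := by ring
    rw [e1] at h2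
    rw [e4] at h2
    rw [e1, e2, e3, e4]
    generalize q⁻¹ ^ (2*m+r+1) = Z at *
    generalize q⁻¹ ^ (2*(m+1)) = M at *
    generalize q⁻¹ ^ r = R at *
    generalize qPoch q (2*m+r) = P at *
    generalize qSqPoch q m = Q at *
    generalize qSqPoch q (m+r) = Q' at *
    linear_combination P * (1-Z) * (1-M*R) * Q * Q' * (1-M*R^2) * h3
      + (1+Z)*(1-Z)*(1-M*R)*(1-M*R^2) * h1 + M*(1+R)*R*(1-M*R)*h2

theorem qpochhammer_mass_identity (q : ℝ) (hq : 1 < q) (m r₂ : ℕ) :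
    ∑ k ∈ range (m + 1), q ^ k * pTilde q m r₂ k =
      (1 + (q ^ r₂)⁻¹) / (1 + (q ^ (2 * m + r₂))⁻¹) := by
  have hq0 : q ≠ 0 := by positivity
  have hS := qSqPoch_ne q hq (2*m+r₂)
  have hp : ∀ k, q ^ k * pTilde q m r₂ k =
      qPoch q (2 * m + r₂) * qSqPoch q m * qSqPoch q (m + r₂) / qSqPoch q (2*m+r₂) *
        (aTerm q m r₂ k + q ^ k * (1 - q⁻¹ ^ k) * aTerm q m r₂ k) := by
    intro k
    have hx : q ^ k * q⁻¹ ^ k = 1 := by rw [← mul_pow, mul_inv_cancel₀ hq0, one_pow]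
    have : aTerm q m r₂ k + q ^ k * (1 - q⁻¹ ^ k) * aTerm q m r₂ k = q ^ k * aTerm q m r₂ k := by
      linear_combination (-aTerm q m r₂ k) * hx
    rw [this]
    unfold pTilde aTerm
    have h1 := qPoch_ne q hq k
    have h2 := qPoch_ne q hq (k+r₂)
    have h3 := qSqPoch_ne q hq (m-k)
    rw [inv_pow]
    field_simp
  have hpos : 1 + (q ^ (2 * m + r₂))⁻¹ ≠ 0 := by positivity
  simp only [hp]
  rw [← Finset.mul_sum, Finset.sum_add_distrib]
  have hA := aSum_closed q hq m r₂
  rw [div_mul_eq_mul_div, div_eq_div_iff hS hpos]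
  cases m with
  | zero =>
    have h1 := qPoch_ne q hq r₂
    simp [aSum] at *
    linear_combination (1 + (q ^ r₂)⁻¹) * hA
  | succ m =>
    rw [sum_three q hq]
    have hB := aSum_closed q hq m (r₂+1)
    change _ * (aSum q (m+1) r₂ + _) * _ = _
    rw [← inv_pow, ← inv_pow]
    rw [show 2*(m+1)+r₂ = 2*m+r₂+1+1 by ring, show m+1+r₂ = m+r₂+1 by ring] at *
    rw [show 2*m+(r₂+1) = 2*m+r₂+1 by ring, show m+(r₂+1) = m+r₂+1 by ring] at hB
    rw [qPoch_succ' q (2*m+r₂+1), qSqPoch_succ' q (2*m+r₂+1), qSqPoch_succ' q m] at *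
    have e2 : q⁻¹ ^ (2*(2*m+r₂+1+1)) = (q⁻¹ ^ (2*(m+1)) * q⁻¹ ^ r₂)^2 := by ring
    have e3 : q⁻¹ ^ (2*m+r₂+1+1) = q⁻¹ ^ (2*(m+1)) * q⁻¹ ^ r₂ := by ring
    rw [e2, e3] at hA ⊢
    generalize q⁻¹ ^ (2*(m+1)) = M at *
    generalize q⁻¹ ^ r₂ = R at *
    linear_combination (1+M*R) * hA + (1+M*R) * (1-M*R) * (1-M) * R * hB
end

section
/- Let q be a prime power, X an F_q-vector space with dim X = m, e ∈ X a nonzero vector, and Y ⊆ X a subspace with e ∉ Y and dim Y = r. Let t ≥ 1 and let s′ be a nonnegative integer with r + t − m ≤ s′ ≤ min(r, t−1). Then the number of subspaces E ⊆ X with e ∈ E, dim E = t, and dim(E ∩ Y) = s′, divided by the total number of subspaces E ⊆ X with e ∈ E and dim E = t, equals q^{s′(r+t−m−s′)} · (q)_r (q)_{t−1} (q)_{m−1−r} (q)_{m−t} / ( (q)_{r−s′} (q)_{s′} (q)_{t−1−s′} (q)_{m−1} (q)_{m+s′−r−t} ). -/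
open Finset

/-- The `q`-Pochhammer-type symbol `(q)_j = ∏_{i=1}^{j}(1 − q^{−i})` as a rational number. -/
def qPochQ (q : ℕ) (j : ℕ) : ℚ :=
  ∏ i ∈ Icc 1 j, (1 - ((q : ℚ) ^ i)⁻¹)

namespace RSI

/-- Pairs of tuples: independent vectors in `Y`, and vectors independent modulo `W`. -/
def Tup {F X : Type*} [Field F] [AddCommGroup X] [Module F X] (Y W : Submodule F X) (s j : ℕ) :
    Set ((Fin s → X) × (Fin j → X)) :=
  {p | (∀ i, p.1 i ∈ Y) ∧ LinearIndependent F p.1 ∧ LinearIndependent F (W.mkQ ∘ p.2)}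

/-- Lifts of independent tuples in the quotient. -/
noncomputable def liftEquiv {F X : Type*} [Field F] [AddCommGroup X] [Module F X]
    (W : Submodule F X) (j : ℕ) :
    {w : Fin j → X // LinearIndependent F (W.mkQ ∘ w)} ≃
      {u : Fin j → X ⧸ W // LinearIndependent F u} × (Fin j → W) where
  toFun w := (⟨W.mkQ ∘ w.1, w.2⟩, fun i => ⟨w.1 i - (W.mkQ (w.1 i)).out, by
    rw [← Submodule.Quotient.eq]
    exact (Quotient.out_eq (W.mkQ (w.1 i))).symm⟩)
  invFun p := ⟨fun i => (p.1.1 i).out + (p.2 i : X), by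
    have h : (W.mkQ ∘ fun i => (p.1.1 i).out + (p.2 i : X)) = p.1.1 := by
      funext i
      have h1 : W.mkQ ((p.1.1 i).out) = p.1.1 i := Quotient.out_eq (p.1.1 i)
      have h2 : W.mkQ (p.2 i : X) = 0 := by simp
      simp only [Function.comp, map_add, h1, h2, add_zero]
    rw [h]; exact p.1.2⟩
  left_inv w := by ext i; simp
  right_inv p := by
    have h : ∀ i, W.mkQ ((p.1.1 i).out + (p.2 i : X)) = p.1.1 i := by
      intro i
      have h1 : W.mkQ ((p.1.1 i).out) = p.1.1 i := Quotient.out_eq (p.1.1 i)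
      have h2 : W.mkQ (p.2 i : X) = 0 := by simp
      simp only [map_add, h1, h2, add_zero]
    refine Prod.ext (Subtype.ext (funext fun i => h i)) (funext fun i => Subtype.ext ?_)
    simp only [h]
    abel

/-- number of independent `k`-tuples in dimension `n` -/
def LI (q n k : ℕ) : ℕ := ∏ i : Fin k, (q ^ n - q ^ i.val)

/-- decomposition of the tuples -/
def tupEquiv {F X : Type*} [Field F] [AddCommGroup X] [Module F X]
    (Y W : Submodule F X) (s j : ℕ) :
    Tup Y W s j ≃ {v : Fin s → Y // LinearIndependent F v} ×
      {w : Fin j → X // LinearIndependent F (W.mkQ ∘ w)} where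
  toFun p := (⟨fun i => ⟨p.1.1 i, p.2.1 i⟩, LinearIndependent.of_comp Y.subtype p.2.2.1⟩,
    ⟨p.1.2, p.2.2.2⟩)
  invFun p := ⟨(fun i => (p.1.1 i : X), p.2.1), fun i => (p.1.1 i).2,
    p.1.2.map' Y.subtype (Submodule.ker_subtype Y), p.2.2⟩
  left_inv _ := rfl
  right_inv _ := rfl

theorem card_tup {F X : Type*} [Field F] [Fintype F] [AddCommGroup X] [Module F X]
    [FiniteDimensional F X] (Y W : Submodule F X) (s j r w m : ℕ)
    (hY : Module.finrank F Y = r) (hW : Module.finrank F W = w) (hX : Module.finrank F X = m)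
    (hs : s ≤ r) (hj : j + w ≤ m) :
    Nat.card (Tup Y W s j) =
      LI (Fintype.card F) r s * (LI (Fintype.card F) (m - w) j * Fintype.card F ^ (w * j)) := by
  have : Finite X := Module.finite_of_finite F
  have hQ := Submodule.finrank_quotient_add_finrank W
  have hQ' : Module.finrank F (X ⧸ W) = m - w := by omega
  have : Finite (X ⧸ W) := Module.finite_of_finite F
  rw [Nat.card_congr (tupEquiv Y W s j), Nat.card_prod, Nat.card_congr (liftEquiv W j),
    Nat.card_prod, card_linearIndependent (by omega), card_linearIndependent (by omega),
    Nat.card_fun, Module.natCard_eq_pow_finrank (K := F), hQ', hY, hW]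
  simp [LI, pow_mul]

section
variable {F X : Type*} [Field F] [AddCommGroup X] [Module F X]

/-- the subspace spanned by a pair of tuples and `e` -/
def spn (F : Type*) {X : Type*} [Field F] [AddCommGroup X] [Module F X]
    (e : X) {s j : ℕ} (p : (Fin s → X) × (Fin j → X)) : Submodule F X :=
  (Submodule.span F (Set.range p.1) ⊔ Submodule.span F {e}) ⊔ Submodule.span F (Set.range p.2)

theorem disj (e : X) (Y : Submodule F X) (heY : e ∉ Y) :
    Submodule.span F {e} ⊓ Y = ⊥ := by
  rw [← disjoint_iff, disjoint_comm]
  have he : e ≠ 0 := fun h => heY (h ▸ Y.zero_mem)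
  rw [Submodule.disjoint_span_singleton' he]
  exact heY

theorem spn_inf (e : X) (Y : Submodule F X) (heY : e ∉ Y) {s j : ℕ}
    {p : (Fin s → X) × (Fin j → X)} (hp : p ∈ Tup Y (Y ⊔ Submodule.span F {e}) s j) :
    spn F e p ⊓ Y = Submodule.span F (Set.range p.1) ∧
    (Submodule.span F (Set.range p.1) ⊔ Submodule.span F {e}) ⊓ Submodule.span F (Set.range p.2)
      = ⊥ := by
  obtain ⟨h1, h2, h3⟩ := hp
  have hV : Submodule.span F (Set.range p.1) ≤ Y := by
    rw [Submodule.span_le]; rintro _ ⟨i, rfl⟩; exact h1 i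
  have hd := (Submodule.range_ker_disjoint h3)
  rw [Submodule.ker_mkQ, disjoint_iff] at hd
  have hVW : Submodule.span F (Set.range p.1) ⊔ Submodule.span F {e} ≤ Y ⊔ Submodule.span F {e} :=
    sup_le_sup_right hV _
  constructor
  · have e1 : spn F e p ⊓ (Y ⊔ Submodule.span F {e}) =
        Submodule.span F (Set.range p.1) ⊔ Submodule.span F {e} := by
      rw [spn, sup_inf_assoc_of_le _ hVW, hd, sup_bot_eq]
    have e2 : spn F e p ⊓ Y = spn F e p ⊓ (Y ⊔ Submodule.span F {e}) ⊓ Y := by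
      rw [inf_assoc, inf_eq_right.2 (le_sup_left : Y ≤ Y ⊔ Submodule.span F {e})]
    rw [e2, e1, sup_inf_assoc_of_le _ hV, disj e Y heY, sup_bot_eq]
  · rw [← le_bot_iff, ← hd]
    exact le_inf inf_le_right (inf_le_left.trans hVW)

theorem spn_finrank [FiniteDimensional F X] (e : X) (Y : Submodule F X) (heY : e ∉ Y) {s j : ℕ}
    {p : (Fin s → X) × (Fin j → X)} (hp : p ∈ Tup Y (Y ⊔ Submodule.span F {e}) s j) :
    Module.finrank F (spn F e p) = s + 1 + j := by
  have he : e ≠ 0 := fun h => heY (h ▸ Y.zero_mem)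
  have hV : Submodule.span F (Set.range p.1) ≤ Y := by
    rw [Submodule.span_le]; rintro _ ⟨i, rfl⟩; exact hp.1 i
  have a1 := finrank_span_eq_card hp.2.1
  have a2 := finrank_span_eq_card (LinearIndependent.of_comp _ hp.2.2)
  have a3 := finrank_span_singleton (K := F) he
  have b1 := Submodule.finrank_sup_add_finrank_inf_eq
    (Submodule.span F (Set.range p.1)) (Submodule.span F {e})
  have b2 := Submodule.finrank_sup_add_finrank_inf_eq
    (Submodule.span F (Set.range p.1) ⊔ Submodule.span F {e}) (Submodule.span F (Set.range p.2))
  have c1 : Submodule.span F (Set.range p.1) ⊓ Submodule.span F {e} = ⊥ := by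
    rw [← le_bot_iff, ← disj e Y heY]
    exact le_inf inf_le_right (inf_le_left.trans hV)
  rw [(spn_inf e Y heY hp).2] at b2
  rw [c1] at b1
  simp only [finrank_bot, Fintype.card_fin] at *
  rw [spn]
  omega

/-- the fibre -/
def fibEquiv (Y W E : Submodule F X) (s j : ℕ) :
    {p : (Fin s → X) × (Fin j → X) // p ∈ Tup Y W s j ∧ (∀ i, p.1 i ∈ E) ∧ (∀ i, p.2 i ∈ E)} ≃
      Tup (Y.comap E.subtype) (W.comap E.subtype) s j where
  toFun p := ⟨(fun i => ⟨p.1.1 i, p.2.2.1 i⟩, fun i => ⟨p.1.2 i, p.2.2.2 i⟩),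
    fun i => p.2.1.1 i, LinearIndependent.of_comp E.subtype p.2.1.2.1,
    LinearIndependent.of_comp (Submodule.mapQ _ W E.subtype le_rfl) p.2.1.2.2⟩
  invFun p := ⟨(fun i => (p.1.1 i : X), fun i => (p.1.2 i : X)),
    ⟨fun i => p.2.1 i, p.2.2.1.map' E.subtype (Submodule.ker_subtype E),
      p.2.2.2.map' (Submodule.mapQ _ W E.subtype le_rfl) (by
        rw [Submodule.ker_mapQ]; exact Submodule.mkQ_map_self _)⟩,
    fun i => (p.1.1 i).2, fun i => (p.1.2 i).2⟩
  left_inv _ := rfl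
  right_inv _ := rfl

end

theorem count {F X : Type*} [Field F] [Fintype F] [AddCommGroup X] [Module F X]
    [FiniteDimensional F X] (e : X) (Y : Submodule F X) (heY : e ∉ Y) (s j r m t : ℕ)
    (hY : Module.finrank F Y = r) (hX : Module.finrank F X = m) (ht : t = s + 1 + j)
    (hs : s ≤ r) (hj : j + (r + 1) ≤ m) :
    Nat.card {E : Submodule F X //
          e ∈ E ∧ Module.finrank F E = t ∧ Module.finrank F (E ⊓ Y : Submodule F X) = s} *
      (LI (Fintype.card F) s s * (LI (Fintype.card F) j j * Fintype.card F ^ ((s + 1) * j))) =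
    LI (Fintype.card F) r s *
      (LI (Fintype.card F) (m - (r + 1)) j * Fintype.card F ^ ((r + 1) * j)) := by
  have : Finite X := Module.finite_of_finite F
  have he : e ≠ 0 := fun h => heY (h ▸ Y.zero_mem)
  have hfr : ∀ Z : Submodule F X, e ∉ Z →
      Module.finrank F (Z ⊔ Submodule.span F {e} : Submodule F X) = Module.finrank F Z + 1 := by
    intro Z hZ
    have b1 := Submodule.finrank_sup_add_finrank_inf_eq Z (Submodule.span F {e})
    rw [inf_comm, disj e Z hZ, finrank_bot, finrank_span_singleton he] at b1
    omega
  set W := Y ⊔ Submodule.span F {e} with hWdef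
  have hW : Module.finrank F W = r + 1 := by rw [hfr Y heY, hY]
  rw [← card_tup Y W s j r (r + 1) m hY hW hX hs hj]
  let f : Tup Y W s j → {E : Submodule F X //
          e ∈ E ∧ Module.finrank F E = t ∧ Module.finrank F (E ⊓ Y : Submodule F X) = s} :=
    fun p => ⟨spn F e p.1, by
      refine ⟨?_, by rw [spn_finrank e Y heY p.2, ht], ?_⟩
      · exact Submodule.mem_sup_left (Submodule.mem_sup_right (Submodule.mem_span_singleton_self e))
      · rw [(spn_inf e Y heY p.2).1, finrank_span_eq_card p.2.2.1, Fintype.card_fin]⟩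
  have : Finite (Submodule F X) := Finite.of_injective (fun E => (E : Set X)) SetLike.coe_injective
  have : Fintype {E : Submodule F X //
          e ∈ E ∧ Module.finrank F E = t ∧ Module.finrank F (E ⊓ Y : Submodule F X) = s} :=
    Fintype.ofFinite _
  rw [← Nat.card_congr (Equiv.sigmaFiberEquiv f), Nat.card_sigma]
  have key : ∀ E : {E : Submodule F X //
          e ∈ E ∧ Module.finrank F E = t ∧ Module.finrank F (E ⊓ Y : Submodule F X) = s},
      Nat.card {p // f p = E} =
      (LI (Fintype.card F) s s * (LI (Fintype.card F) j j * Fintype.card F ^ ((s + 1) * j))) := by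
    rintro ⟨E, heE, hE, hEY⟩
    have eq1 : {p // f p = ⟨E, heE, hE, hEY⟩} ≃ {p : (Fin s → X) × (Fin j → X) //
        p ∈ Tup Y W s j ∧ (∀ i, p.1 i ∈ E) ∧ (∀ i, p.2 i ∈ E)} :=
      { toFun := fun p => ⟨p.1.1, p.1.2, by
          have h : spn F e p.1.1 = E := congrArg Subtype.val p.2
          constructor
          · intro i
            refine h.le ?_
            exact Submodule.mem_sup_left (Submodule.mem_sup_left (Submodule.subset_span ⟨i, rfl⟩))
          · intro i
            refine h.le ?_
            exact Submodule.mem_sup_right (Submodule.subset_span ⟨i, rfl⟩)⟩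
        invFun := fun p => ⟨⟨p.1, p.2.1⟩, by
          apply Subtype.ext
          change spn F e p.1 = E
          apply Submodule.eq_of_le_of_finrank_eq
          · refine sup_le (sup_le ?_ ?_) ?_
            · rw [Submodule.span_le]; rintro _ ⟨i, rfl⟩; exact p.2.2.1 i
            · rw [Submodule.span_le]; simpa using heE
            · rw [Submodule.span_le]; rintro _ ⟨i, rfl⟩; exact p.2.2.2 i
          · rw [spn_finrank e Y heY p.2.1, hE, ht]⟩
        left_inv := fun _ => rfl
        right_inv := fun _ => rfl }
    have g1 : Module.finrank F (Y.comap E.subtype) = s := by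
      rw [← Submodule.finrank_map_subtype_eq, Submodule.map_comap_subtype, hEY]
    have g2 : Module.finrank F (W.comap E.subtype) = s + 1 := by
      have h : E ⊓ W = (E ⊓ Y) ⊔ Submodule.span F {e} := by
        rw [hWdef, inf_comm, sup_comm,
          sup_inf_assoc_of_le _ (by simpa using heE), sup_comm, inf_comm]
      rw [← Submodule.finrank_map_subtype_eq, Submodule.map_comap_subtype, h, hfr, hEY]
      exact fun hh => heY hh.2
    rw [Nat.card_congr eq1, Nat.card_congr (fibEquiv Y W E s j),
      card_tup _ _ s j s (s + 1) t g1 g2 hE le_rfl (by omega)]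
    rw [show t - (s + 1) = j by omega]
  rw [Finset.sum_congr rfl (fun E _ => key E)]
  simp [Nat.card_eq_fintype_card]

theorem qPoch_pos (q : ℕ) (hq : 1 < q) (j : ℕ) : qPochQ q j ≠ 0 := by
  rw [qPochQ, Finset.prod_ne_zero_iff]
  intro i hi
  have : (1 : ℚ) < (q : ℚ) ^ i :=
    one_lt_pow₀ (by exact_mod_cast hq) (by have := (Finset.mem_Icc.1 hi).1; omega)
  have := inv_lt_one_of_one_lt₀ this
  linarith

theorem LI_eq (q n k : ℕ) (hq : 1 < q) (hk : k ≤ n) :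
    (LI q n k : ℚ) = (q : ℚ) ^ (n * k) * qPochQ q n / qPochQ q (n - k) := by
  have hq0 : (q : ℚ) ≠ 0 := by exact_mod_cast (by omega : q ≠ 0)
  rw [eq_div_iff (qPoch_pos q hq _)]
  induction k with
  | zero => simp [LI]
  | succ k ih =>
    have ih := ih (by omega)
    have h1 : LI q n (k + 1) = LI q n k * (q ^ n - q ^ k) := by
      simp [LI, Fin.prod_univ_castSucc]
    have h2 : qPochQ q (n - k) = qPochQ q (n - (k + 1)) * (1 - ((q : ℚ) ^ (n - k))⁻¹) := by
      obtain ⟨d, rfl⟩ := Nat.exists_eq_add_of_le hk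
      rw [show k + 1 + d - k = d + 1 by omega, show k + 1 + d - (k + 1) = d by omega, qPochQ,
        qPochQ, Finset.prod_Icc_succ_top (by omega)]
    have h3 : (q : ℚ) ^ n = q ^ k * q ^ (n - k) := by rw [← pow_add]; congr 1; omega
    have hle : q ^ k ≤ q ^ n := Nat.pow_le_pow_right (by omega) (by omega)
    have hne : (q : ℚ) ^ (n - k) ≠ 0 := pow_ne_zero _ hq0
    rw [h1, Nat.cast_mul, Nat.cast_sub hle, Nat.cast_pow, Nat.cast_pow, mul_add, pow_add, mul_one]
    have h4 : (q : ℚ) ^ n - q ^ k = q ^ n * (1 - ((q : ℚ) ^ (n - k))⁻¹) := by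
      rw [h3]; field_simp
    rw [h4]
    rw [h2] at ih
    linear_combination (q : ℚ) ^ n * ih

theorem count_eq {F X : Type*} [Field F] [Fintype F] [AddCommGroup X] [Module F X]
    [FiniteDimensional F X] (e : X) (Y : Submodule F X) (heY : e ∉ Y) (s j r m t q : ℕ)
    (hq : q = Fintype.card F)
    (hY : Module.finrank F Y = r) (hX : Module.finrank F X = m) (ht : t = s + 1 + j)
    (hs : s ≤ r) (hj : j + (r + 1) ≤ m) :
    (Nat.card {E : Submodule F X //
          e ∈ E ∧ Module.finrank F E = t ∧ Module.finrank F (E ⊓ Y : Submodule F X) = s} : ℚ) =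
    (q : ℚ) ^ (s * (r - s) + (m - t) * j) * (qPochQ q r * qPochQ q (m - 1 - r)) /
      (qPochQ q (r - s) * qPochQ q (m - 1 - r - j) * qPochQ q s * qPochQ q j) := by
  have h := count e Y heY s j r m t hY hX ht hs hj
  rw [← hq] at h
  have hq1 : 1 < q := hq ▸ Fintype.one_lt_card
  have hq0 : (q : ℚ) ≠ 0 := by exact_mod_cast (by omega : q ≠ 0)
  have h' := congrArg (Nat.cast : ℕ → ℚ) h
  push_cast at h'
  rw [LI_eq q s s hq1 le_rfl, LI_eq q j j hq1 le_rfl, LI_eq q r s hq1 hs,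
    LI_eq q _ j hq1 (by omega)] at h'
  have z : qPochQ q 0 = 1 := by simp [qPochQ]
  rw [Nat.sub_self, Nat.sub_self, z, show m - (r + 1) = m - 1 - r by omega] at h'
  have p1 := qPoch_pos q hq1 (r - s)
  have p2 := qPoch_pos q hq1 (m - 1 - r - j)
  have p3 := qPoch_pos q hq1 s
  have p4 := qPoch_pos q hq1 j
  set N := (Nat.card {E : Submodule F X //
          e ∈ E ∧ Module.finrank F E = t ∧ Module.finrank F (E ⊓ Y : Submodule F X) = s} : ℚ)
  have hA : (q : ℚ) ^ (r * s) * (q ^ ((m - 1 - r) * j) * q ^ ((r + 1) * j)) =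
      q ^ (s * (r - s) + (m - t) * j) * (q ^ (s * s) * (q ^ (j * j) * q ^ ((s + 1) * j))) := by
    simp only [← pow_add]
    congr 1
    obtain ⟨a, rfl⟩ := Nat.exists_eq_add_of_le hs
    obtain ⟨b, rfl⟩ := Nat.exists_eq_add_of_le hj
    subst ht
    rw [show j + (s + a + 1) + b - 1 - (s + a) = j + b by omega, show s + a - s = a by omega,
      show j + (s + a + 1) + b - (s + 1 + j) = a + b by omega]
    ring
  have hB : (q ^ (s * s) * (q ^ (j * j) * q ^ ((s + 1) * j)) : ℚ) ≠ 0 := by positivity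
  rw [eq_div_iff (by positivity)]
  apply mul_right_cancel₀ hB
  field_simp at h'
  linear_combination h' + qPochQ q r * qPochQ q (m - 1 - r) * hA

end RSI

/-- Let `q` be a prime power, `X` an `F_q`-vector space with `dim X = m`, `e ∈ X` a nonzero
vector, and `Y ⊆ X` a subspace with `e ∉ Y` and `dim Y = r`.  Let `t ≥ 1` and let `s′` be a
nonnegative integer with `r + t − m ≤ s′ ≤ min(r, t−1)`.  Then the number of subspaces
`E ⊆ X` with `e ∈ E`, `dim E = t`, and `dim(E ∩ Y) = s′`, divided by the total number of
subspaces `E ⊆ X` with `e ∈ E` and `dim E = t`, equals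
`q^{s′(r+t−m−s′)} (q)_r (q)_{t−1} (q)_{m−1−r} (q)_{m−t} /
  ((q)_{r−s′} (q)_{s′} (q)_{t−1−s′} (q)_{m−1} (q)_{m+s′−r−t})`. -/
theorem random_subspace_intersection_probability
    {F X : Type*} [Field F] [Fintype F]
    [AddCommGroup X] [Module F X] [FiniteDimensional F X]
    (q m r t s' : ℕ) (hq : q = Fintype.card F)
    (hm : Module.finrank F X = m)
    (e : X) (he : e ≠ 0)
    (Y : Submodule F X) (heY : e ∉ Y) (hr : Module.finrank F Y = r)
    (ht : 1 ≤ t)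
    (hs'₁ : (r : ℤ) + t - m ≤ s') (hs'₂ : s' ≤ r) (hs'₃ : s' ≤ t - 1) :
    (Nat.card {E : Submodule F X //
          e ∈ E ∧ Module.finrank F E = t ∧ Module.finrank F (E ⊓ Y : Submodule F X) = s'} :
        ℚ) /
      (Nat.card {E : Submodule F X // e ∈ E ∧ Module.finrank F E = t} : ℚ) =
    (q : ℚ) ^ ((s' : ℤ) * ((r : ℤ) + t - m - s')) *
        (qPochQ q r * qPochQ q (t - 1) * qPochQ q (m - 1 - r) * qPochQ q (m - t)) /
      (qPochQ q (r - s') * qPochQ q s' * qPochQ q (t - 1 - s') * qPochQ q (m - 1) *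
        qPochQ q (m + s' - r - t)) := by
  have hq1 : 1 < q := hq ▸ Fintype.one_lt_card
  have hq0 : (q : ℚ) ≠ 0 := by exact_mod_cast (by omega : q ≠ 0)
  have hrm : r + 1 ≤ m := by
    have : Y < ⊤ := lt_top_iff_ne_top.2 (fun h => heY (h ▸ Submodule.mem_top))
    have := Submodule.finrank_lt this.ne
    omega
  have hN := RSI.count_eq e Y heY s' (t - 1 - s') r m t q hq hr hm (by omega) hs'₂ (by omega)
  have hD := RSI.count_eq e (⊥ : Submodule F X) (by simpa using he) 0 (t - 1) 0 m t q hq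
    (by simp) hm (by omega) le_rfl (by omega)
  have hD' : Nat.card {E : Submodule F X // e ∈ E ∧ Module.finrank F E = t ∧
      Module.finrank F (E ⊓ ⊥ : Submodule F X) = 0} =
      Nat.card {E : Submodule F X // e ∈ E ∧ Module.finrank F E = t} := by
    simp
  rw [hD'] at hD
  rw [hN, hD]
  have z : qPochQ q 0 = 1 := by simp [qPochQ]
  have hpow : (q : ℚ) ^ (s' * (r - s') + (m - t) * (t - 1 - s')) =
      (q : ℚ) ^ ((s' : ℤ) * ((r : ℤ) + t - m - s')) * q ^ ((m - t) * (t - 1)) := by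
    rw [← zpow_natCast, ← zpow_natCast, ← zpow_add₀ hq0]
    congr 1
    have h1 : ((t - 1 : ℕ) : ℤ) = t - 1 := by omega
    have h2 : ((t - 1 - s' : ℕ) : ℤ) = t - 1 - s' := by omega
    have h3 : ((m - t : ℕ) : ℤ) = m - t := by omega
    have h4 : ((r - s' : ℕ) : ℤ) = r - s' := by omega
    push_cast [h1, h2, h3, h4]
    ring
  rw [hpow, show m - 1 - r - (t - 1 - s') = m + s' - r - t by omega,
    show m - 1 - 0 - (t - 1) = m - t by omega]
  simp only [Nat.sub_zero, zero_mul, zero_add, z, mul_one, one_mul]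
  have p1 := RSI.qPoch_pos q hq1 (r - s')
  have p2 := RSI.qPoch_pos q hq1 (m + s' - r - t)
  have p3 := RSI.qPoch_pos q hq1 s'
  have p4 := RSI.qPoch_pos q hq1 (t - 1 - s')
  have p5 := RSI.qPoch_pos q hq1 (t - 1)
  have p6 := RSI.qPoch_pos q hq1 (m - t)
  have p7 := RSI.qPoch_pos q hq1 (m - 1)
  have p8 : (q : ℚ) ^ ((m - t) * (t - 1)) ≠ 0 := pow_ne_zero _ hq0
  generalize (q : ℚ) ^ ((m - t) * (t - 1)) = A at *
  generalize (q : ℚ) ^ ((s' : ℤ) * ((r : ℤ) + t - m - s')) = B at *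
  field_simp
end
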